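/- arXiv:2011.05170 — 2 statements merged into one kernel-verified Lean document; each statement's English description precedes it below -/
import Mathlib

section
/- Suppose θ_d > 0 for all d. Then the measure μ is the unique optimal solution of the linear program inf { ∫_{X×Y} T dφ : φ a finite nonnegative Borel measure on X×Y with ∫_{X×Y} x^{d_x} y^{d_y} dφ = μ_{(d_x,d_y)} for all (d_x,d_y) ∈ D }. That is, every feasible φ satisfies ∫ T dμ ≤ ∫ T dφ, and ∫ T dφ = ∫ T dμ implies φ = μ. -/
open MeasureTheory Set

noncomputable section

lemma aux_pow (y f : ℝ) (hy : 0 ≤ y) (hf : 0 ≤ f) (k : ℕ) :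
    f ^ (k+1) + (k+1) * f ^ k * (y - f) ≤ y ^ (k+1) := by
  induction k with
  | zero => simp
  | succ k ih =>
    have h1 := mul_le_mul_of_nonneg_left ih hy
    have h2 : 0 ≤ ((k:ℝ)+1) * f ^ k * (y - f)^2 := by positivity
    push_cast
    have e : y ^ (k+1+1) = y * y ^ (k+1) := by ring
    rw [e]
    refine le_trans ?_ h1
    have : y * (f ^ (k + 1) + (↑k + 1) * f ^ k * (y - f)) -
      (f ^ (k + 1 + 1) + (↑k + 1 + 1) * f ^ (k + 1) * (y - f)) =
        ((k:ℝ)+1) * f ^ k * (y - f)^2 := by ring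
    linarith

lemma aux_ext {n : ℕ} {X : Set (Fin n → ℝ)} (hXc : IsCompact X)
    (P Q : Measure (Fin n → ℝ)) [IsFiniteMeasure P] [IsFiniteMeasure Q]
    (hP : P Xᶜ = 0) (hQ : Q Xᶜ = 0)
    (h : ∀ a : Fin n → ℕ, ∫ x, (∏ i, x i ^ a i) ∂P = ∫ x, (∏ i, x i ^ a i) ∂Q) : P = Q := by
  have hm : MeasurableSet X := hXc.measurableSet
  have : CompactSpace X := isCompact_iff_compactSpace.mp hXc
  have rP : P.restrict X = P := Measure.restrict_eq_self_of_ae_mem (by rwa [ae_iff])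
  have rQ : Q.restrict X = Q := Measure.restrict_eq_self_of_ae_mem (by rwa [ae_iff])
  have : IsFiniteMeasure (P.comap (Subtype.val : X → _)) :=
    ⟨by rw [(MeasurableEmbedding.subtype_coe hm).comap_apply]; exact measure_lt_top _ _⟩
  have : IsFiniteMeasure (Q.comap (Subtype.val : X → _)) :=
    ⟨by rw [(MeasurableEmbedding.subtype_coe hm).comap_apply]; exact measure_lt_top _ _⟩
  suffices H : P.comap (Subtype.val : X → _) = Q.comap (Subtype.val : X → _) by
    rw [← rP, ← rQ, ← map_comap_subtype_coe hm, ← map_comap_subtype_coe hm, H]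
  let c : Fin n → BoundedContinuousFunction X ℝ := fun i =>
    BoundedContinuousFunction.mkOfCompact ⟨fun x => x.1 i, (continuous_apply i).comp continuous_subtype_val⟩
  let S : Subalgebra ℝ (BoundedContinuousFunction X ℝ) := (MvPolynomial.aeval c).range
  let A : StarSubalgebra ℝ (BoundedContinuousFunction X ℝ) :=
    { S with
      star_mem' := by
        intro a ha
        have : star a = a := by ext x; simp
        rw [this]; exact ha }
  have : PolishSpace X := hXc.isClosed.polishSpace
  refine ext_of_forall_mem_subalgebra_integral_eq_of_polish (𝕜 := ℝ) (A := A) ?_ ?_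
  · intro x y hxy
    have : ∃ i, x.1 i ≠ y.1 i := by
      by_contra hc
      push Not at hc
      exact hxy (Subtype.ext (funext hc))
    obtain ⟨i, hi⟩ := this
    refine ⟨_, ⟨_, ⟨c i, ⟨MvPolynomial.X i, by simp⟩, rfl⟩, rfl⟩, ?_⟩
    exact hi
  · rintro g ⟨p, rfl⟩
    change ∫ x, (MvPolynomial.aeval c p) x ∂_ = ∫ x, (MvPolynomial.aeval c p) x ∂_
    have hmon : ∀ (ν : Measure (Fin n → ℝ)), ν.restrict X = ν → ∀ (s : Fin n →₀ ℕ) (r : ℝ),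
        ∫ x, (MvPolynomial.aeval c (MvPolynomial.monomial s r)) x ∂(ν.comap (Subtype.val : X → _))
          = r * ∫ x : Fin n → ℝ, (∏ i, x i ^ s i) ∂ν := by
      intro ν hR s r
      have : ∀ x : X, (MvPolynomial.aeval c (MvPolynomial.monomial s r)) x
          = r * ∏ i, x.1 i ^ s i := by
        intro x
        rw [MvPolynomial.aeval_monomial, Finsupp.prod_fintype _ _ (by simp)]
        have h2 : (∏ i, c i ^ s i) x = ∏ i, x.1 i ^ s i := by
          rw [BoundedContinuousFunction.coe_prod, Finset.prod_apply]
          rfl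
        rw [BoundedContinuousFunction.mul_apply, h2]
        simp [BoundedContinuousFunction.algebraMap_apply]
      simp_rw [this]
      rw [integral_const_mul, integral_subtype_comap hm (fun x => ∏ i, x i ^ s i), hR]
    induction p using MvPolynomial.induction_on' with
    | monomial s r =>
      rw [hmon P rP, hmon Q rQ, h]
    | add p q hp hq =>
      simp only [map_add, BoundedContinuousFunction.coe_add, Pi.add_apply]
      rw [integral_add (BoundedContinuousFunction.integrable _ _)
          (BoundedContinuousFunction.integrable _ _),
        integral_add (BoundedContinuousFunction.integrable _ _)
          (BoundedContinuousFunction.integrable _ _), hp, hq]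

lemma aux_mon_bound {n : ℕ} {x : Fin n → ℝ} (hx : x ∈ Icc (0 : Fin n → ℝ) 1) (a : Fin n → ℕ) :
    0 ≤ ∏ i, x i ^ a i ∧ ∏ i, x i ^ a i ≤ 1 := by
  refine ⟨Finset.prod_nonneg fun i _ => pow_nonneg (hx.1 i) _,
    Finset.prod_le_one (fun i _ => pow_nonneg (hx.1 i) _)
      fun i _ => pow_le_one₀ (hx.1 i) (hx.2 i)⟩

lemma aux_sum {n : ℕ} {γ : ℝ}
    (θ : ((Fin n → ℕ) × ℕ) → ℝ) (hθ : ∀ d, 0 < θ d)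
    (hsum : Summable fun d : (Fin n → ℕ) × ℕ => θ d * max 1 γ ^ d.2)
    (T : (Fin n → ℝ) × ℝ → ℝ)
    (hT : ∀ p : (Fin n → ℝ) × ℝ,
      T p = ∑' d : (Fin n → ℕ) × ℕ, θ d * ((∏ i, p.1 i ^ d.1 i) * p.2 ^ d.2))
    (φ : Measure ((Fin n → ℝ) × ℝ)) [IsFiniteMeasure φ]
    (hφ : ∀ᵐ p ∂φ, p.1 ∈ Icc (0 : Fin n → ℝ) 1 ∧ p.2 ∈ Icc 0 γ) :
    HasSum (fun d : (Fin n → ℕ) × ℕ => θ d * ∫ p, (∏ i, p.1 i ^ d.1 i) * p.2 ^ d.2 ∂φ)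
      (∫ p, T p ∂φ) := by
  have hb : ∀ d : (Fin n → ℕ) × ℕ, ∀ᵐ p ∂φ,
      ‖θ d * ((∏ i, p.1 i ^ d.1 i) * p.2 ^ d.2)‖ ≤ θ d * max 1 γ ^ d.2 := by
    intro d
    filter_upwards [hφ] with p hp
    obtain ⟨h0, h1⟩ := aux_mon_bound hp.1 d.1
    have h2 : 0 ≤ p.2 ^ d.2 := pow_nonneg hp.2.1 _
    rw [Real.norm_of_nonneg (mul_nonneg (hθ d).le (mul_nonneg h0 h2))]
    refine mul_le_mul_of_nonneg_left ?_ (hθ d).le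
    calc _ ≤ 1 * p.2 ^ d.2 := mul_le_mul_of_nonneg_right h1 h2
      _ = p.2 ^ d.2 := one_mul _
      _ ≤ _ := pow_le_pow_left₀ hp.2.1 (hp.2.2.trans (le_max_right _ _)) _
  have hi : ∀ d : (Fin n → ℕ) × ℕ,
      Integrable (fun p : (Fin n → ℝ) × ℝ => θ d * ((∏ i, p.1 i ^ d.1 i) * p.2 ^ d.2)) φ := by
    intro d
    exact Integrable.of_bound (Measurable.aestronglyMeasurable (by fun_prop)) _ (hb d)
  have := hasSum_integral_of_summable_integral_norm hi ?_
  · simp_rw [hT]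
    simpa only [integral_const_mul] using this
  · refine Summable.of_nonneg_of_le (fun d => integral_nonneg fun _ => norm_nonneg _) (fun d => ?_)
      (hsum.mul_right (φ.real univ))
    calc _ ≤ ∫ p, θ d * max 1 γ ^ d.2 ∂φ :=
          integral_mono_ae (hi d).norm (integrable_const _) (hb d)
      _ = _ := by simp [mul_comm]

/-- With strictly positive summable weights `θ`, the graph measure
`μ = δ_{f(x)}(dy) λ(dx)` (realized as the pushforward of `λ` by `x ↦ (x, f x)`) is the
unique optimal solution of the LP minimizing `∫ T dφ` over finite nonnegative Borel
measures `φ` on `X × Y` whose moments of index `(d_x, d_y)` with `d_y ≤ 1` match those of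
`μ`: every feasible `φ` satisfies `∫ T dμ ≤ ∫ T dφ`, with equality only if `φ = μ`. -/
theorem graph_measure_unique_optimal
    (n : ℕ) (hn : 1 ≤ n)
    (X : Set (Fin n → ℝ)) (hXsub : X ⊆ Icc 0 1) (hXc : IsCompact X)
    (γ : ℝ) (hγ : 0 < γ)
    (lam : Measure (Fin n → ℝ)) [IsProbabilityMeasure lam] (hlam : lam Xᶜ = 0)
    (f : (Fin n → ℝ) → ℝ) (hf : Measurable f) (hfY : ∀ x ∈ X, f x ∈ Icc 0 γ)
    (θ : ((Fin n → ℕ) × ℕ) → ℝ) (hθ : ∀ d, 0 < θ d)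
    (hsum : Summable fun d : (Fin n → ℕ) × ℕ => θ d * max 1 γ ^ d.2)
    (T : (Fin n → ℝ) × ℝ → ℝ)
    (hT : ∀ p : (Fin n → ℝ) × ℝ,
      T p = ∑' d : (Fin n → ℕ) × ℕ, θ d * ((∏ i, p.1 i ^ d.1 i) * p.2 ^ d.2))
    (μ : Measure ((Fin n → ℝ) × ℝ)) (hμ : μ = lam.map fun x => (x, f x)) :
    ∀ φ : Measure ((Fin n → ℝ) × ℝ), IsFiniteMeasure φ →
      φ ((X ×ˢ Icc (0:ℝ) γ)ᶜ) = 0 →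
      (∀ d : (Fin n → ℕ) × ℕ, d.2 ≤ 1 →
        ∫ p : (Fin n → ℝ) × ℝ, (∏ i, p.1 i ^ d.1 i) * p.2 ^ d.2 ∂φ
          = ∫ x, (∏ i, x i ^ d.1 i) * f x ^ d.2 ∂lam) →
      (∫ p, T p ∂μ ≤ ∫ p, T p ∂φ) ∧ ((∫ p, T p ∂φ) = ∫ p, T p ∂μ → φ = μ) := by
  intro φ hfin hφ0 hmom
  have hXm : MeasurableSet X := hXc.measurableSet
  have hφ : ∀ᵐ p ∂φ, p.1 ∈ X ∧ p.2 ∈ Icc 0 γ := by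
    rw [ae_iff]; exact hφ0
  have hl : ∀ᵐ x ∂lam, x ∈ X := by rw [ae_iff]; exact hlam
  -- first marginal
  have hmarg : φ.map Prod.fst = lam := by
    refine aux_ext hXc _ _ ?_ hlam ?_
    · rw [Measure.map_apply measurable_fst hXm.compl]
      exact measure_mono_null (t := (X ×ˢ Icc (0:ℝ) γ)ᶜ) (fun p hp hq => hp hq.1) hφ0
    · intro a
      rw [integral_map measurable_fst.aemeasurable
        (Measurable.aestronglyMeasurable (by fun_prop))]
      simpa using hmom (a, 0) (by simp)
  have hfφ : ∀ᵐ p ∂φ, f p.1 ∈ Icc 0 γ := by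
    filter_upwards [hφ] with p hp using hfY _ hp.1
  have hint0 : ∀ g : (Fin n → ℝ) → ℝ, Measurable g → ∫ p, g p.1 ∂φ = ∫ x, g x ∂lam := by
    intro g hg
    rw [← hmarg, integral_map measurable_fst.aemeasurable hg.aestronglyMeasurable]
  have if1 : IsFiniteMeasure (φ.withDensity fun p => ENNReal.ofReal p.2) := by
    refine isFiniteMeasure_withDensity_ofReal (Integrable.hasFiniteIntegral ?_)
    refine Integrable.of_bound measurable_snd.aestronglyMeasurable γ ?_
    filter_upwards [hφ] with p hp
    rw [Real.norm_of_nonneg hp.2.1]; exact hp.2.2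
  have if2 : IsFiniteMeasure (lam.withDensity fun x => ENNReal.ofReal (f x)) := by
    refine isFiniteMeasure_withDensity_ofReal (Integrable.hasFiniteIntegral ?_)
    refine Integrable.of_bound hf.aestronglyMeasurable γ ?_
    filter_upwards [hl] with p hp
    rw [Real.norm_of_nonneg (hfY p hp).1]; exact (hfY p hp).2
  have e1 : ∀ g : (Fin n → ℝ) → ℝ, Measurable g →
      ∫ x, g x ∂((φ.withDensity fun p => ENNReal.ofReal p.2).map Prod.fst)
        = ∫ p, g p.1 * p.2 ∂φ := by
    intro g hg
    rw [integral_map measurable_fst.aemeasurable hg.aestronglyMeasurable,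
      integral_withDensity_eq_integral_toReal_smul (by fun_prop) (by simp)]
    refine integral_congr_ae ?_
    filter_upwards [hφ] with p hp
    rw [ENNReal.toReal_ofReal hp.2.1, smul_eq_mul, mul_comm]
  have e2 : ∀ g : (Fin n → ℝ) → ℝ, 
      ∫ x, g x ∂(lam.withDensity fun x => ENNReal.ofReal (f x)) = ∫ x, g x * f x ∂lam := by
    intro g
    rw [integral_withDensity_eq_integral_toReal_smul (by fun_prop) (by simp)]
    refine integral_congr_ae ?_
    filter_upwards [hl] with p hp
    rw [ENNReal.toReal_ofReal (hfY p hp).1, smul_eq_mul, mul_comm]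
  have hmarg1 : (φ.withDensity fun p => ENNReal.ofReal p.2).map Prod.fst
      = lam.withDensity fun x => ENNReal.ofReal (f x) := by
    refine aux_ext hXc _ _ ?_ (withDensity_absolutelyContinuous _ _ hlam) ?_
    · rw [Measure.map_apply measurable_fst hXm.compl]
      refine withDensity_absolutelyContinuous _ _ ?_
      exact measure_mono_null (t := (X ×ˢ Icc (0:ℝ) γ)ᶜ) (fun p hp hq => hp hq.1) hφ0
    · intro a
      rw [e1 _ (by fun_prop), e2]
      simpa using hmom (a, 1) (by simp)
  have hint1 : ∀ g : (Fin n → ℝ) → ℝ, Measurable g →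
      ∫ p, g p.1 * p.2 ∂φ = ∫ x, g x * f x ∂lam := by
    intro g hg
    rw [← e1 g hg, hmarg1, e2]
  have hgm : Measurable fun x => (x, f x) := by fun_prop
  have hμm : ∀ d : (Fin n → ℕ) × ℕ, ∫ p, (∏ i, p.1 i ^ d.1 i) * p.2 ^ d.2 ∂μ
      = ∫ x, (∏ i, x i ^ d.1 i) * f x ^ d.2 ∂lam := by
    intro d
    rw [hμ, integral_map hgm.aemeasurable (Measurable.aestronglyMeasurable (by fun_prop))]
  -- integrability of x^a f^j y^k
  have hI : ∀ (a : Fin n → ℕ) (j k : ℕ),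
      Integrable (fun p : (Fin n → ℝ) × ℝ => (∏ i, p.1 i ^ a i) * f p.1 ^ j * p.2 ^ k) φ := by
    intro a j k
    refine Integrable.of_bound (Measurable.aestronglyMeasurable (by fun_prop))
      (1 * γ ^ j * γ ^ k) ?_
    filter_upwards [hφ, hfφ] with p hp hq
    obtain ⟨h0, h1⟩ := aux_mon_bound (hXsub hp.1) a
    have := hp.2.1
    have := hp.2.2
    have := hq.1
    have := hq.2
    rw [Real.norm_of_nonneg (by positivity)]
    gcongr
  have hle : ∀ d : (Fin n → ℕ) × ℕ, ∫ p, (∏ i, p.1 i ^ d.1 i) * p.2 ^ d.2 ∂μ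
      ≤ ∫ p, (∏ i, p.1 i ^ d.1 i) * p.2 ^ d.2 ∂φ := by
    rintro ⟨a, k⟩
    rw [hμm]
    rcases k with _ | k
    · rw [hmom (a, 0) (by simp)]
    dsimp only
    have i1 := hI a (k+1) 0
    have i2 := hI a k 1
    have i3 := hI a 0 (k+1)
    simp only [pow_zero, mul_one, pow_one] at i1 i2 i3
    have q1 := hint0 (fun x => (∏ i, x i ^ a i) * f x ^ (k+1)) (by fun_prop)
    have q2 := hint1 (fun x => (∏ i, x i ^ a i) * f x ^ k) (by fun_prop)
    have q3 : ∫ x, (∏ i, x i ^ a i) * f x ^ k * f x ∂lam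
      = ∫ x, (∏ i, x i ^ a i) * f x ^ (k+1) ∂lam := by
      congr 1; ext x; ring
    calc _ = ∫ p, ((∏ i, p.1 i ^ a i) * f p.1 ^ (k+1) + ((k:ℝ)+1) *
            ((∏ i, p.1 i ^ a i) * f p.1 ^ k * p.2 - (∏ i, p.1 i ^ a i) * f p.1 ^ (k+1))) ∂φ := by
          have i4 : Integrable (fun p : (Fin n → ℝ) × ℝ => ((k:ℝ)+1) *
            ((∏ i, p.1 i ^ a i) * f p.1 ^ k * p.2 - (∏ i, p.1 i ^ a i) * f p.1 ^ (k+1))) φ :=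
            (i2.sub i1).const_mul _
          rw [integral_add i1 i4, integral_const_mul, integral_sub i2 i1,
            q1, q2, q3]
          ring
      _ ≤ _ := by
          refine integral_mono_ae (i1.add ((i2.sub i1).const_mul _)) i3 ?_
          filter_upwards [hφ, hfφ] with p hp hq
          obtain ⟨h0, -⟩ := aux_mon_bound (hXsub hp.1) a
          refine le_trans (le_of_eq ?_)
            (mul_le_mul_of_nonneg_left (aux_pow p.2 (f p.1) hp.2.1 hq.1 k) h0)
          ring
  have hμp : IsFiniteMeasure μ := by rw [hμ]; infer_instance
  have sφ := aux_sum (γ := γ) θ hθ hsum T hT φ (by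
    filter_upwards [hφ] with p hp using ⟨hXsub hp.1, hp.2⟩)
  have sμ := aux_sum (γ := γ) θ hθ hsum T hT μ (by
    rw [hμ]
    refine (ae_map_iff hgm.aemeasurable
      ((measurableSet_Icc.preimage measurable_fst).inter
        (measurableSet_Icc.preimage measurable_snd))).2 ?_
    filter_upwards [hl] with x hx using ⟨hXsub hx, hfY x hx⟩)
  refine ⟨hasSum_le (fun d => mul_le_mul_of_nonneg_left (hle d) (hθ d).le) sμ sφ, fun heq => ?_⟩
  have sd := sφ.sub sμ
  rw [heq, sub_self, hasSum_zero_iff_of_nonneg (fun d =>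
    sub_nonneg.2 (mul_le_mul_of_nonneg_left (hle d) (hθ d).le))] at sd
  have h2 := congrFun sd (0, 2)
  dsimp only at h2
  rw [hμm (0, 2)] at h2
  simp only [Pi.zero_apply, ← mul_sub, mul_eq_zero, (hθ _).ne', false_or] at h2
  simp only [Pi.zero_apply, pow_zero, Finset.prod_const_one, one_mul] at h2
  have i1 := hI 0 2 0
  have i2 := hI 0 1 1
  have i3 := hI 0 0 2
  simp only [Pi.zero_apply, pow_zero, Finset.prod_const_one, one_mul, mul_one, pow_one] at i1 i2 i3
  have q1 := hint0 (fun x => f x ^ 2) (by fun_prop)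
  have q2 := hint1 f hf
  have q3 : ∫ x, f x * f x ∂lam = ∫ x, f x ^ 2 ∂lam := by
    congr 1; ext x; ring
  have hz : ∫ p, (p.2 ^ 2 - 2 * (f p.1 * p.2) + f p.1 ^ 2) ∂φ = 0 := by
    have i4 : Integrable (fun p : (Fin n → ℝ) × ℝ => p.2 ^ 2 - 2 * (f p.1 * p.2)) φ :=
      i3.sub (i2.const_mul _)
    rw [integral_add i4 i1, integral_sub i3 (i2.const_mul _),
      integral_const_mul, q1, q2, q3]
    linarith
  have i5 : Integrable (fun p : (Fin n → ℝ) × ℝ => p.2 ^ 2 - 2 * (f p.1 * p.2) + f p.1 ^ 2) φ :=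
    (i3.sub (i2.const_mul _)).add i1
  rw [integral_eq_zero_iff_of_nonneg (fun p => by
      have := sq_nonneg (p.2 - f p.1)
      simp only [Pi.zero_apply]; nlinarith) i5] at hz
  have hy : (fun p : (Fin n → ℝ) × ℝ => (p.1, f p.1)) =ᵐ[φ] id := by
    filter_upwards [hz] with p hp
    have : (p.2 - f p.1) ^ 2 = 0 := by
      simp only [Pi.zero_apply] at hp; linarith
    have := sub_eq_zero.1 (pow_eq_zero_iff (two_ne_zero) |>.1 this)
    exact Prod.ext rfl this.symm
  calc φ = φ.map id := Measure.map_id.symm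
    _ = φ.map (fun p => (p.1, f p.1)) := (Measure.map_congr hy).symm
    _ = (φ.map Prod.fst).map (fun x => (x, f x)) := (Measure.map_map hgm measurable_fst).symm
    _ = μ := by rw [hmarg, hμ]
end
end

section
/- Fix s ∈ ℕ and let 𝒯_s(φ) := Σ_{d ∈ ℕ^{n+1}_s} φ_{2d}. For every r ≥ max(s, max_j d_j), the semidefinite program τ_r := inf { 𝒯_s(φ) : φ feasible at order r } attains its infimum at some feasible φ^r, and τ_r ≤ 𝒯_s((μ_d)) = Σ_{d ∈ ℕ^{n+1}_s} μ_{2d}. -/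
open MeasureTheory Set

noncomputable section

/-- The finite set `ℕ^{n+1}_r` of multi-indices `d ∈ ℕ^n × ℕ` with `|d| ≤ r`. -/
def idx (n r : ℕ) : Finset ((Fin n → ℕ) × ℕ) :=
  Finset.filter (fun d => (∑ i, d.1 i) + d.2 ≤ r)
    ((Fintype.piFinset fun _ : Fin n => Finset.range (r + 1)) ×ˢ Finset.range (r + 1))

/-- Multi-indices `e ∈ ℕ^n` with `|e| ≤ r`. -/
def xIdx (n r : ℕ) : Finset (Fin n → ℕ) :=
  Finset.filter (fun e => ∑ i, e i ≤ r) (Fintype.piFinset fun _ : Fin n => Finset.range (r + 1))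

/-- Evaluation of a polynomial in `x` of degree `≤ r` given by its coefficients `c`. -/
def polyEval (n r : ℕ) (c : (Fin n → ℕ) → ℝ) (x : Fin n → ℝ) : ℝ :=
  ∑ e ∈ xIdx n r, c e * ∏ i, x i ^ e i

/-- The moment matrix `M_r(φ)`, with rows and columns indexed by `ℕ^{n+1}_r`. -/
def momMat (n r : ℕ) (φ : ((Fin n → ℕ) × ℕ) → ℝ) : Matrix (idx n r) (idx n r) ℝ :=
  fun a b => φ (fun i => a.1.1 i + b.1.1 i, a.1.2 + b.1.2)

/-- The localizing matrix `M_{r−t}(g φ)` of a polynomial `g` in `x` with coefficients `c`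
and degree `≤ 2t`. -/
def locMatX (n : ℕ) (c : (Fin n → ℕ) → ℝ) (t r : ℕ) (φ : ((Fin n → ℕ) × ℕ) → ℝ) :
    Matrix (idx n (r - t)) (idx n (r - t)) ℝ :=
  fun a b => ∑ e ∈ xIdx n (2 * t),
    c e * φ (fun i => e i + a.1.1 i + b.1.1 i, a.1.2 + b.1.2)

/-- The localizing matrix `M_{r−1}(g_{m+1} φ)` of the polynomial `g_{m+1}(x,y) = y(γ−y)`. -/
def locMatY (n : ℕ) (γ : ℝ) (r : ℕ) (φ : ((Fin n → ℕ) × ℕ) → ℝ) :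
    Matrix (idx n (r - 1)) (idx n (r - 1)) ℝ :=
  fun a b => γ * φ (fun i => a.1.1 i + b.1.1 i, a.1.2 + b.1.2 + 1)
    - φ (fun i => a.1.1 i + b.1.1 i, a.1.2 + b.1.2 + 2)

/-- Feasibility of a pseudo-moment sequence `φ` at relaxation order `r`:
`M_r(φ) ⪰ 0`, `M_{r−d_j}(g_j φ) ⪰ 0` for `j = 1,…,m+1`, and `φ_d = μ_d` for all
`d ∈ D = {d : d_y ≤ 1}` with `|d| ≤ 2r`. -/
def Feasible (n m : ℕ) (γ : ℝ) (g : Fin m → (Fin n → ℕ) → ℝ) (t : Fin m → ℕ)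
    (μmom : ((Fin n → ℕ) × ℕ) → ℝ) (r : ℕ) (φ : ((Fin n → ℕ) × ℕ) → ℝ) : Prop :=
  (momMat n r φ).PosSemidef ∧
  (∀ j, (locMatX n (g j) (t j) r φ).PosSemidef) ∧
  (locMatY n γ r φ).PosSemidef ∧
  ∀ d : (Fin n → ℕ) × ℕ, d.2 ≤ 1 → (∑ i, d.1 i) + d.2 ≤ 2 * r → φ d = μmom d

lemma mem_idx {n r : ℕ} {d : (Fin n → ℕ) × ℕ} : d ∈ idx n r ↔ (∑ i, d.1 i) + d.2 ≤ r := by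
  unfold idx
  simp only [Finset.mem_filter, Finset.mem_product, Fintype.mem_piFinset, Finset.mem_range,
    and_iff_right_iff_imp]
  intro h
  refine ⟨fun i => ?_, by omega⟩
  have := Finset.single_le_sum (f := d.1) (fun _ _ => Nat.zero_le _) (Finset.mem_univ i)
  omega

lemma sum_le_of_mem_xIdx {n r : ℕ} {e : Fin n → ℕ} (h : e ∈ xIdx n r) : ∑ i, e i ≤ r := by
  unfold xIdx at h
  exact (Finset.mem_filter.mp h).2

lemma psd_two {ι : Type*} {M : Matrix ι ι ℝ} (hM : M.PosSemidef) (i j : ι) (c d : ℝ) :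
    0 ≤ c ^ 2 * M i i + 2 * (c * d) * M i j + d ^ 2 * M j j := by
  have h := (hM.submatrix ![i, j]).dotProduct_mulVec_nonneg ![c, d]
  have hs : M j i = M i j := by
    have := hM.isHermitian.apply i j
    simpa using this
  simp [Matrix.mulVec, dotProduct, Fin.sum_univ_two, hs] at h
  linarith

lemma isClosed_psd {E ι : Type*} [TopologicalSpace E] [Finite ι] (M : E → Matrix ι ι ℝ)
    (hM : ∀ a b, Continuous fun φ => M φ a b) : IsClosed {φ | (M φ).PosSemidef} := by
  cases nonempty_fintype ι
  have hc : Continuous M := continuous_pi fun a => continuous_pi fun b => hM a b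
  have : {φ | (M φ).PosSemidef} = {φ | (M φ).conjTranspose = M φ} ∩
      ⋂ x : ι → ℝ, {φ | 0 ≤ star x ⬝ᵥ ((M φ).mulVec x)} := by
    ext φ
    simp [Matrix.posSemidef_iff_dotProduct_mulVec, Matrix.IsHermitian]
  rw [this]
  refine (isClosed_eq hc.matrix_conjTranspose hc).inter (isClosed_iInter fun x => ?_)
  refine isClosed_le continuous_const ?_
  exact continuous_const.dotProduct (hc.matrix_mulVec continuous_const)

lemma psd_integral {Ω ι : Type*} [MeasurableSpace Ω] (lam : Measure Ω) [Finite ι]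
    (w : Ω → ℝ) (p : ι → Ω → ℝ) (hw : ∀ᵐ x ∂lam, 0 ≤ w x)
    (hint : ∀ a b, Integrable (fun x => w x * (p a x * p b x)) lam)
    (M : Matrix ι ι ℝ) (hM : ∀ a b, M a b = ∫ x, w x * (p a x * p b x) ∂lam) :
    M.PosSemidef := by
  cases nonempty_fintype ι
  refine Matrix.PosSemidef.of_dotProduct_mulVec_nonneg ?_ fun c => ?_
  · ext a b
    simp only [Matrix.conjTranspose_apply, hM, star_trivial]
    congr 1; ext x; ring
  · have : star c ⬝ᵥ (M.mulVec c) = ∫ x, w x * (∑ a, c a * p a x) ^ 2 ∂lam := by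
      have e : ∀ x, w x * (∑ a, c a * p a x) ^ 2
          = ∑ a, ∑ b, (c a * c b) * (w x * (p a x * p b x)) := by
        intro x
        rw [sq, Finset.sum_mul_sum, Finset.mul_sum]
        refine Finset.sum_congr rfl fun a _ => ?_
        rw [Finset.mul_sum]
        refine Finset.sum_congr rfl fun b _ => ?_
        ring
      simp_rw [e]
      rw [integral_finsetSum _ fun a _ => integrable_finsetSum _ fun b _ =>
        (hint a b).const_mul _]
      simp only [dotProduct, Matrix.mulVec, star_trivial]
      refine Finset.sum_congr rfl fun a _ => ?_
      rw [integral_finsetSum _ fun b _ => (hint a b).const_mul _, Finset.mul_sum]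
      refine Finset.sum_congr rfl fun b _ => ?_
      rw [integral_const_mul, hM]; ring
    rw [this]
    refine integral_nonneg_of_ae ?_
    filter_upwards [hw] with x hx
    exact mul_nonneg hx (sq_nonneg _)

lemma exists_sub {n : ℕ} (d : Fin n → ℕ) (k : ℕ) (hk : k ≤ ∑ i, d i) :
    ∃ e : Fin n → ℕ, (∀ i, e i ≤ d i) ∧ ∑ i, e i = k := by
  induction k with
  | zero => exact ⟨0, by simp, by simp⟩
  | succ k ih =>
    obtain ⟨e, he, hs⟩ := ih (by omega)
    obtain ⟨i, -, hi⟩ := Finset.exists_lt_of_sum_lt (s := Finset.univ) (f := e) (g := d) (by omega)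
    refine ⟨e + Pi.single i 1, fun j => ?_, ?_⟩
    · by_cases h : j = i
      · subst h; simp; omega
      · simp [h, he j]
    · simp [Finset.sum_add_distrib, hs]

lemma exists_split {n r : ℕ} (d : (Fin n → ℕ) × ℕ) (hd : (∑ i, d.1 i) + d.2 ≤ 2 * r) :
    ∃ a b : (Fin n → ℕ) × ℕ, (∑ i, a.1 i) + a.2 ≤ r ∧ (∑ i, b.1 i) + b.2 ≤ r ∧
      (fun i => a.1 i + b.1 i, a.2 + b.2) = d := by
  obtain ⟨e, he, hs⟩ := exists_sub d.1 (min r (∑ i, d.1 i)) (min_le_right _ _)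
  have h2 : (∑ i, (d.1 i - e i)) + ∑ i, e i = ∑ i, d.1 i := by
    rw [← Finset.sum_add_distrib]
    exact Finset.sum_congr rfl fun i _ => Nat.sub_add_cancel (he i)
  refine ⟨(e, min d.2 (r - ∑ i, e i)), (fun i => d.1 i - e i, d.2 - min d.2 (r - ∑ i, e i)),
    ?_, ?_, ?_⟩
  · simp only; omega
  · simp only; omega
  · refine Prod.ext ?_ ?_
    · funext i; simp only; have := he i; omega
    · simp only; omega

lemma bound_even {n m : ℕ} {γ : ℝ} {g : Fin m → (Fin n → ℕ) → ℝ} {t : Fin m → ℕ}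
    {μmom : ((Fin n → ℕ) × ℕ) → ℝ} {r : ℕ} {φ : ((Fin n → ℕ) × ℕ) → ℝ}
    (h : Feasible n m γ g t μmom r φ) (a : Fin n → ℕ) (k : ℕ) (hk : (∑ i, a i) + k ≤ r) :
    φ (fun i => a i + a i, k + k) ≤ (γ ^ 2) ^ k * μmom (fun i => a i + a i, 0) := by
  induction k with
  | zero =>
    rw [h.2.2.2 _ (by simp)]
    · simp
    · simp only [Finset.sum_add_distrib]; omega
  | succ k ih =>
    have ih := ih (by omega)
    have h1 := psd_two h.1 ⟨(a, k), mem_idx.2 (by simp only; omega)⟩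
      ⟨(a, k + 1), mem_idx.2 (by simp only; omega)⟩ γ (-1)
    have h2 := (h.2.2.1).diag_nonneg (i := ⟨(a, k), mem_idx.2 (by simp only; omega)⟩)
    simp only [momMat, locMatY] at h1 h2
    have e1 : k + (k + 1) = k + k + 1 := by ring
    have e2 : k + 1 + (k + 1) = k + k + 2 := by ring
    rw [e1, e2] at h1
    rw [e2, pow_succ]
    nlinarith [mul_le_mul_of_nonneg_left ih (sq_nonneg γ)]

lemma bound_all {n m : ℕ} {γ : ℝ} {g : Fin m → (Fin n → ℕ) → ℝ} {t : Fin m → ℕ}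
    {μmom : ((Fin n → ℕ) × ℕ) → ℝ} {r : ℕ} (d : (Fin n → ℕ) × ℕ)
    (hd : (∑ i, d.1 i) + d.2 ≤ 2 * r) :
    ∃ B : ℝ, ∀ φ, Feasible n m γ g t μmom r φ → |φ d| ≤ B := by
  obtain ⟨a, b, ha, hb, rfl⟩ := exists_split d hd
  refine ⟨((γ ^ 2) ^ a.2 * μmom (fun i => a.1 i + a.1 i, 0) +
    (γ ^ 2) ^ b.2 * μmom (fun i => b.1 i + b.1 i, 0)) / 2, fun φ h => ?_⟩
  have h1 := bound_even h a.1 a.2 ha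
  have h2 := bound_even h b.1 b.2 hb
  have h3 := psd_two h.1 ⟨a, mem_idx.2 ha⟩ ⟨b, mem_idx.2 hb⟩ 1 1
  have h4 := psd_two h.1 ⟨a, mem_idx.2 ha⟩ ⟨b, mem_idx.2 hb⟩ 1 (-1)
  simp only [momMat] at h3 h4
  rw [abs_le]
  constructor <;> linarith

lemma feasible_closed (n m : ℕ) (γ : ℝ) (g : Fin m → (Fin n → ℕ) → ℝ) (t : Fin m → ℕ)
    (μmom : ((Fin n → ℕ) × ℕ) → ℝ) (r : ℕ) :
    IsClosed {φ | Feasible n m γ g t μmom r φ} := by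
  have h1 : IsClosed {φ | (momMat n r φ).PosSemidef} :=
    isClosed_psd _ fun a b => by unfold momMat; fun_prop
  have h2 : IsClosed (⋂ j, {φ | (locMatX n (g j) (t j) r φ).PosSemidef}) :=
    isClosed_iInter fun j => isClosed_psd _ fun a b => by unfold locMatX; fun_prop
  have h3 : IsClosed {φ | (locMatY n γ r φ).PosSemidef} :=
    isClosed_psd _ fun a b => by unfold locMatY; fun_prop
  have h4 : IsClosed (⋂ d : (Fin n → ℕ) × ℕ, ⋂ _ : d.2 ≤ 1,
      ⋂ _ : (∑ i, d.1 i) + d.2 ≤ 2 * r, {φ : ((Fin n → ℕ) × ℕ) → ℝ | φ d = μmom d}) :=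
    isClosed_iInter fun d => isClosed_iInter fun _ => isClosed_iInter fun _ =>
      isClosed_eq (continuous_apply d) continuous_const
  convert h1.inter (h2.inter (h3.inter h4)) using 1
  ext φ
  simp only [Feasible, mem_inter_iff, mem_iInter, mem_setOf_eq]

lemma feasible_congr {n m : ℕ} {γ : ℝ} {g : Fin m → (Fin n → ℕ) → ℝ} {t : Fin m → ℕ}
    {μmom : ((Fin n → ℕ) × ℕ) → ℝ} {r : ℕ} (hr : 1 ≤ r) (ht : ∀ j, t j ≤ r)
    {φ ψ : ((Fin n → ℕ) × ℕ) → ℝ}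
    (he : ∀ d : (Fin n → ℕ) × ℕ, (∑ i, d.1 i) + d.2 ≤ 2 * r → ψ d = φ d)
    (h : Feasible n m γ g t μmom r φ) : Feasible n m γ g t μmom r ψ := by
  obtain ⟨h1, h2, h3, h4⟩ := h
  refine ⟨?_, fun j => ?_, ?_, fun d hd1 hd2 => (he d hd2).trans (h4 d hd1 hd2)⟩
  · have : momMat n r ψ = momMat n r φ := by
      ext a b
      have ha := mem_idx.1 a.2
      have hb := mem_idx.1 b.2
      exact he _ (by simp only [Finset.sum_add_distrib]; omega)
    rwa [this]
  · have : locMatX n (g j) (t j) r ψ = locMatX n (g j) (t j) r φ := by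
      ext a b
      have ha := mem_idx.1 a.2
      have hb := mem_idx.1 b.2
      have := ht j
      refine Finset.sum_congr rfl fun e hE => ?_
      have := sum_le_of_mem_xIdx hE
      rw [he _ (by simp only [Finset.sum_add_distrib]; omega)]
    rw [this]; exact h2 j
  · have : locMatY n γ r ψ = locMatY n γ r φ := by
      ext a b
      have ha := mem_idx.1 a.2
      have hb := mem_idx.1 b.2
      unfold locMatY
      rw [he _ (by simp only [Finset.sum_add_distrib]; omega),
        he _ (by simp only [Finset.sum_add_distrib]; omega)]
    rwa [this]

lemma feasible_mu (n m : ℕ) (γ : ℝ)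
    (g : Fin m → (Fin n → ℕ) → ℝ) (t : Fin m → ℕ)
    (X : Set (Fin n → ℝ))
    (hXdef : X = {x | ∀ j, 0 ≤ polyEval n (2 * t j) (g j) x})
    (hXsub : X ⊆ Icc 0 1)
    (lam : Measure (Fin n → ℝ)) [IsProbabilityMeasure lam] (hlam : lam Xᶜ = 0)
    (f : (Fin n → ℝ) → ℝ) (hf : Measurable f) (hfY : ∀ x ∈ X, f x ∈ Icc 0 γ)
    (μmom : ((Fin n → ℕ) × ℕ) → ℝ)
    (hμmom : ∀ d : (Fin n → ℕ) × ℕ,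
      μmom d = ∫ x, (∏ i, x i ^ d.1 i) * f x ^ d.2 ∂lam) (r : ℕ) :
    Feasible n m γ g t μmom r μmom := by
  have hX : ∀ᵐ x ∂lam, x ∈ X := hlam
  have hint : ∀ (d : Fin n → ℕ) (k : ℕ),
      Integrable (fun x => (∏ i, x i ^ d i) * f x ^ k) lam := by
    intro d k
    refine Integrable.of_bound (C := γ ^ k) (Measurable.aestronglyMeasurable ?_) ?_
    · fun_prop
    · filter_upwards [hX] with x hx
      have hx1 := hXsub hx
      have hf1 := hfY x hx
      have h0 : 0 ≤ ∏ i, x i ^ d i := Finset.prod_nonneg fun i _ => pow_nonneg (hx1.1 i) _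
      have h1 : ∏ i, x i ^ d i ≤ 1 :=
        Finset.prod_le_one (fun i _ => pow_nonneg (hx1.1 i) _)
          fun i _ => pow_le_one₀ (hx1.1 i) (hx1.2 i)
      have h2 : f x ^ k ≤ γ ^ k := pow_le_pow_left₀ hf1.1 hf1.2 k
      have h3 : 0 ≤ f x ^ k := pow_nonneg hf1.1 k
      rw [Real.norm_of_nonneg (mul_nonneg h0 h3)]
      nlinarith
  set p : (Fin n → ℕ) × ℕ → (Fin n → ℝ) → ℝ := fun a x => (∏ i, x i ^ a.1 i) * f x ^ a.2 with hp
  refine ⟨?_, fun j => ?_, ?_, fun _ _ _ => rfl⟩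
  · have e : ∀ (a b : idx n r) x, 1 * (p a x * p b x)
        = (∏ i, x i ^ (a.1.1 i + b.1.1 i)) * f x ^ (a.1.2 + b.1.2) := by
      intro a b x
      simp only [hp, pow_add, Finset.prod_mul_distrib]; ring
    refine psd_integral lam (fun _ => 1) (fun a : idx n r => p a) (by simp) ?_ _ ?_
    · intro a b
      simp only [e]; exact hint _ _
    · intro a b
      simp only [e]; exact hμmom _
  · have e : ∀ (a b : idx n (r - t j)) x, polyEval n (2 * t j) (g j) x * (p a x * p b x)
        = ∑ e ∈ xIdx n (2 * t j), g j e * ((∏ i, x i ^ (e i + a.1.1 i + b.1.1 i)) *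
          f x ^ (a.1.2 + b.1.2)) := by
      intro a b x
      simp only [hp, polyEval, pow_add, Finset.prod_mul_distrib, Finset.sum_mul]
      refine Finset.sum_congr rfl fun e _ => ?_
      ring
    refine psd_integral lam (polyEval n (2 * t j) (g j)) (fun a : idx n (r - t j) => p a) ?_ ?_ _ ?_
    · filter_upwards [hX] with x hx
      rw [hXdef] at hx
      exact hx j
    · intro a b
      simp only [e]
      exact integrable_finsetSum _ fun e _ =>
        (hint (fun i => e i + a.1.1 i + b.1.1 i) (a.1.2 + b.1.2)).const_mul _
    · intro a b
      simp only [e]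
      rw [integral_finsetSum _ fun e _ =>
        (hint (fun i => e i + a.1.1 i + b.1.1 i) (a.1.2 + b.1.2)).const_mul _]
      refine Finset.sum_congr rfl fun e _ => ?_
      rw [integral_const_mul, hμmom]
  · have e : ∀ (a b : idx n (r - 1)) x, (f x * (γ - f x)) * (p a x * p b x)
        = γ * ((∏ i, x i ^ (a.1.1 i + b.1.1 i)) * f x ^ (a.1.2 + b.1.2 + 1))
          - (∏ i, x i ^ (a.1.1 i + b.1.1 i)) * f x ^ (a.1.2 + b.1.2 + 2) := by
      intro a b x
      simp only [hp, pow_add, Finset.prod_mul_distrib]; ring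
    refine psd_integral lam (fun x => f x * (γ - f x)) (fun a : idx n (r - 1) => p a) ?_ ?_ _ ?_
    · filter_upwards [hX] with x hx
      exact mul_nonneg (hfY x hx).1 (sub_nonneg.2 (hfY x hx).2)
    · intro a b
      simp only [e]
      exact ((hint (fun i => a.1.1 i + b.1.1 i) _).const_mul _).sub
        (hint (fun i => a.1.1 i + b.1.1 i) _)
    · intro a b
      simp only [e]
      rw [integral_sub ((hint (fun i => a.1.1 i + b.1.1 i) _).const_mul _)
        (hint (fun i => a.1.1 i + b.1.1 i) _), integral_const_mul]
      simp only [locMatY, hμmom]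

/-- For fixed `s` and every `r ≥ max(s, max_j d_j)`, the order-`r`
semidefinite relaxation with objective `𝒯_s(φ) = Σ_{|d| ≤ s} φ_{2d}` attains its infimum
at some feasible `φ^r`, and the attained value is at most `𝒯_s(μ) = Σ_{|d| ≤ s} μ_{2d}`. -/
theorem sdp_attained_and_bounded
    (n m : ℕ) (hn : 1 ≤ n) (hm : 1 ≤ m)
    (γ : ℝ) (hγ : 0 < γ)
    (g : Fin m → (Fin n → ℕ) → ℝ) (t : Fin m → ℕ)
    (hgdeg : ∀ j e, 2 * t j < ∑ i, e i → g j e = 0)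
    (hg1t : t ⟨0, hm⟩ = 1)
    (hg1 : ∀ x : Fin n → ℝ,
      polyEval n (2 * t ⟨0, hm⟩) (g ⟨0, hm⟩) x = (n : ℝ) - ∑ i, x i ^ 2)
    (X : Set (Fin n → ℝ))
    (hXdef : X = {x | ∀ j, 0 ≤ polyEval n (2 * t j) (g j) x})
    (hXsub : X ⊆ Icc 0 1) (hXc : IsCompact X)
    (lam : Measure (Fin n → ℝ)) [IsProbabilityMeasure lam] (hlam : lam Xᶜ = 0)
    (f : (Fin n → ℝ) → ℝ) (hf : Measurable f) (hfY : ∀ x ∈ X, f x ∈ Icc 0 γ)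
    (μmom : ((Fin n → ℕ) × ℕ) → ℝ)
    (hμmom : ∀ d : (Fin n → ℕ) × ℕ,
      μmom d = ∫ x, (∏ i, x i ^ d.1 i) * f x ^ d.2 ∂lam)
    (s : ℕ) :
    ∀ r : ℕ, s ≤ r → 1 ≤ r → (∀ j, t j ≤ r) →
      ∃ φr : ((Fin n → ℕ) × ℕ) → ℝ, Feasible n m γ g t μmom r φr ∧
        (∀ φ : ((Fin n → ℕ) × ℕ) → ℝ, Feasible n m γ g t μmom r φ →
          ∑ d ∈ idx n s, φr (fun i => 2 * d.1 i, 2 * d.2)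
            ≤ ∑ d ∈ idx n s, φ (fun i => 2 * d.1 i, 2 * d.2)) ∧
        ∑ d ∈ idx n s, φr (fun i => 2 * d.1 i, 2 * d.2)
          ≤ ∑ d ∈ idx n s, μmom (fun i => 2 * d.1 i, 2 * d.2) := by
  intro r hsr hr ht
  have hμ := feasible_mu n m γ g t X hXdef hXsub lam hlam f hf hfY μmom hμmom r
  have hB : ∀ d : (Fin n → ℕ) × ℕ, ∃ B : ℝ, (∑ i, d.1 i) + d.2 ≤ 2 * r →
      ∀ φ, Feasible n m γ g t μmom r φ → |φ d| ≤ B := by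
    intro d
    by_cases hd : (∑ i, d.1 i) + d.2 ≤ 2 * r
    · obtain ⟨B, h⟩ := bound_all (γ := γ) (g := g) (t := t) (μmom := μmom) d hd
      exact ⟨B, fun _ => h⟩
    · exact ⟨0, fun h => absurd h hd⟩
  choose B hB using hB
  let tr : (((Fin n → ℕ) × ℕ) → ℝ) → ((Fin n → ℕ) × ℕ) → ℝ :=
    fun φ d => if (∑ i, d.1 i) + d.2 ≤ 2 * r then φ d else 0
  have htr : ∀ φ, ∀ d : (Fin n → ℕ) × ℕ, (∑ i, d.1 i) + d.2 ≤ 2 * r → tr φ d = φ d :=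
    fun φ d hd => if_pos hd
  let K : Set (((Fin n → ℕ) × ℕ) → ℝ) :=
    (Set.univ.pi fun d => Icc (-|B d|) |B d|) ∩ {φ | Feasible n m γ g t μmom r φ}
  have hK : IsCompact K :=
    (isCompact_univ_pi fun d => isCompact_Icc).inter_right (feasible_closed n m γ g t μmom r)
  have hmem : ∀ φ, Feasible n m γ g t μmom r φ → tr φ ∈ K := by
    intro φ hφ
    refine ⟨fun d _ => ?_, feasible_congr hr ht (htr φ) hφ⟩
    by_cases hd : (∑ i, d.1 i) + d.2 ≤ 2 * r
    · rw [htr φ d hd]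
      exact abs_le.1 ((hB d hd φ hφ).trans (le_abs_self _))
    · have : tr φ d = 0 := if_neg hd
      rw [this]
      exact ⟨neg_nonpos.2 (abs_nonneg _), abs_nonneg _⟩
  let T : (((Fin n → ℕ) × ℕ) → ℝ) → ℝ := fun φ => ∑ d ∈ idx n s, φ (fun i => 2 * d.1 i, 2 * d.2)
  have hT : ∀ φ, T (tr φ) = T φ := by
    intro φ
    refine Finset.sum_congr rfl fun d hd => htr φ _ ?_
    have := mem_idx.1 hd
    simp only [← Finset.mul_sum]
    omega
  have hTc : Continuous T := by fun_prop
  obtain ⟨φr, hφr, hmin⟩ := hK.exists_isMinOn ⟨_, hmem _ hμ⟩ hTc.continuousOn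
  have hall : ∀ φ, Feasible n m γ g t μmom r φ → T φr ≤ T φ := fun φ hφ =>
    (hmin (hmem φ hφ)).trans_eq (hT φ)
  exact ⟨φr, hφr.2, hall, hall _ hμ⟩
end
end
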